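/- arXiv:1807.01580 — 6 statements merged into one kernel-verified Lean document; each statement's English description precedes it below -/
import Mathlib

section
/- Let X be a finite type, n : ℕ, and A : Fin n → Set X an injective family of edges. For each i let G_i = {g : Equiv.Perm X | g '' A i = A i}, and suppose σ : Fin n → Fin n → Equiv.Perm X satisfies (σ i j) '' A i = A j for all i, j. Then the intersection of unions of cosets equals the union, over permutations of the index set, of intersections of cosets: ⋂ i, ⋃ j, {σ i j * h | h ∈ G_i} = ⋃ (π : Equiv.Perm (Fin n)), ⋂ i, {σ i (π i) * h | h ∈ G_i}. -/
theorem stmt_3 {X : Type*} [Fintype X] (n : ℕ) (A : Fin n → Set X)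
    (hA : Function.Injective A)
    (σ : Fin n → Fin n → Equiv.Perm X)
    (hσ : ∀ i j, ⇑(σ i j) '' A i = A j) :
    (⋂ i, ⋃ j, {σ i j * h | h ∈ {g : Equiv.Perm X | ⇑g '' A i = A i}})
      = ⋃ (π : Equiv.Perm (Fin n)),
          ⋂ i, {σ i (π i) * h | h ∈ {g : Equiv.Perm X | ⇑g '' A i = A i}} := by
  ext g
  simp only [Set.mem_iInter, Set.mem_iUnion, Set.mem_setOf_eq]
  constructor
  · intro H
    choose p h hh hg using H
    have key : ∀ i, ⇑g '' A i = A (p i) := by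
      intro i
      rw [← hg i, Equiv.Perm.coe_mul, Set.image_comp, hh i, hσ]
    have hp : Function.Injective p := by
      intro i j hij
      apply hA
      apply g.injective.image_injective
      change ⇑g '' A i = ⇑g '' A j
      rw [key, key, hij]
    refine ⟨Equiv.ofBijective p (Finite.injective_iff_bijective.mp hp), fun i => ?_⟩
    exact ⟨h i, hh i, hg i⟩
  · rintro ⟨π, H⟩ i
    exact ⟨π i, H i⟩
end

section
/- Let X be a finite type with decidable equality and let Γ : Finset (Finset X) be a spanning graph on X: every edge A ∈ Γ has A.card = 2, and every point of X lies in some edge. Call an edge e ∈ Γ a radical if every vertex of e lies in no other edge of Γ (∀ x ∈ e, ∀ e' ∈ Γ, x ∈ e' → e' = e). Then the group K_Γ = {g : Equiv.Perm X | ∀ e ∈ Γ, e.image g = e} is trivial (equal to {1}) if and only if Γ has no radicals. -/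
theorem stmt_7 {X : Type*} [Fintype X] [DecidableEq X] (Γ : Finset (Finset X))
    (hcard : ∀ A ∈ Γ, A.card = 2)
    (hspan : ∀ x : X, ∃ A ∈ Γ, x ∈ A) :
    {g : Equiv.Perm X | ∀ e ∈ Γ, e.image ⇑g = e} = {1} ↔
      ¬ ∃ e ∈ Γ, ∀ x ∈ e, ∀ e' ∈ Γ, x ∈ e' → e' = e := by
  constructor
  · rintro h ⟨e, he, hr⟩
    obtain ⟨a, b, hab, rfl⟩ := Finset.card_eq_two.mp (hcard e he)
    have hm : Equiv.swap a b ∈ {g : Equiv.Perm X | ∀ e ∈ Γ, e.image ⇑g = e} := by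
      intro e' he'
      by_cases hee : e' = {a, b}
      · subst hee
        simp [Finset.image_insert, Finset.pair_comm]
      · have ha : a ∉ e' := fun h' => hee (hr a (by simp) e' he' h')
        have hb : b ∉ e' := fun h' => hee (hr b (by simp) e' he' h')
        have : e'.image ⇑(Equiv.swap a b) = e'.image id := by
          apply Finset.image_congr
          intro x hx
          have hx' : x ∈ e' := hx
          exact Equiv.swap_apply_of_ne_of_ne (fun h => ha (h ▸ hx')) (fun h => hb (h ▸ hx'))
        rw [this, Finset.image_id]
    rw [h] at hm
    exact hab (Equiv.swap_eq_one_iff.mp hm)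
  · intro h
    ext g
    simp only [Set.mem_setOf_eq, Set.mem_singleton_iff]
    constructor
    · intro hg
      by_contra hne
      obtain ⟨x, hx⟩ : ∃ x, g x ≠ x := by
        by_contra! hc
        exact hne (Equiv.ext hc)
      have mem : ∀ A ∈ Γ, ∀ y ∈ A, g y ∈ A := fun A hA y hy => by
        have := Finset.mem_image_of_mem g hy
        rwa [hg A hA] at this
      have key : ∀ A ∈ Γ, ∀ y ∈ A, g y ≠ y → A = {y, g y} := fun A hA y hy hgy => by
        symm
        apply Finset.eq_of_subset_of_card_le
        · intro z hz
          rcases Finset.mem_insert.mp hz with rfl | hz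
          · exact hy
          · rw [Finset.mem_singleton.mp hz]; exact mem A hA y hy
        · rw [hcard A hA, Finset.card_pair hgy.symm]
      obtain ⟨A, hA, hxA⟩ := hspan x
      have hAe := key A hA x hxA hx
      have hgx : g (g x) ≠ g x := fun h => hx (g.injective h)
      refine h ⟨A, hA, fun y hy e' he' hye => ?_⟩
      have hgy : g y ≠ y := by
        rw [hAe] at hy
        rcases Finset.mem_insert.mp hy with rfl | hy
        · exact hx
        · rw [Finset.mem_singleton.mp hy]; exact hgx
      rw [key e' he' y hye hgy, ← key A hA y hy hgy]
    · rintro rfl e _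
      simp
end

section
/- Let X be a finite type with decidable equality and let Γ : Finset (Finset X) be a spanning graph on X: every edge A ∈ Γ has A.card = 2, and every point of X lies in some edge. Call an edge e ∈ Γ a radical if every vertex of e lies in no other edge of Γ. Then K_Γ is the direct product of the symmetries of the radicals; precisely, a permutation g : Equiv.Perm X satisfies (∀ e ∈ Γ, e.image g = e) if and only if (a) g maps every radical e of Γ to itself, e.image g = e, and (b) g fixes every point lying in some non-radical edge: for all x : X and all e ∈ Γ with x ∈ e and e not a radical, g x = x. -/
theorem pair_of_card_two {X : Type*} [DecidableEq X] {e : Finset X} (h : e.card = 2)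
    {y z : X} (hy : y ∈ e) (hz : z ∈ e) (hyz : y ≠ z) : e = {y, z} := by
  symm
  apply Finset.eq_of_subset_of_card_le
  · intro w hw
    simp only [Finset.mem_insert, Finset.mem_singleton] at hw
    rcases hw with rfl | rfl <;> assumption
  · rw [h, Finset.card_pair hyz]

theorem stmt_8 {X : Type*} [Fintype X] [DecidableEq X] (Γ : Finset (Finset X))
    (hcard : ∀ A ∈ Γ, A.card = 2)
    (hspan : ∀ x : X, ∃ A ∈ Γ, x ∈ A) (g : Equiv.Perm X) :
    (∀ e ∈ Γ, e.image ⇑g = e) ↔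
      ((∀ e ∈ Γ, (∀ x ∈ e, ∀ e' ∈ Γ, x ∈ e' → e' = e) → e.image ⇑g = e) ∧
       (∀ x : X, ∀ e ∈ Γ, x ∈ e →
          ¬ (∀ y ∈ e, ∀ e' ∈ Γ, y ∈ e' → e' = e) → g x = x)) := by
  constructor
  · intro h
    refine ⟨fun e he _ => h e he, ?_⟩
    intro x e he hx hr
    have hm : ∀ e ∈ Γ, ∀ y ∈ e, g y ∈ e := by
      intro e he y hy
      have := Finset.mem_image_of_mem g hy
      rwa [h e he] at this
    push Not at hr
    obtain ⟨y, hy, e', he', hy', hne⟩ := hr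
    have hgy : g y = y := by
      by_contra hc
      apply hne
      rw [pair_of_card_two (hcard e' he') (hm e' he' y hy') hy' hc,
        pair_of_card_two (hcard e he) (hm e he y hy) hy hc]
    by_cases hxy : x = y
    · rw [hxy, hgy]
    · have h1 := hm e he x hx
      rw [pair_of_card_two (hcard e he) hx hy hxy] at h1
      simp only [Finset.mem_insert, Finset.mem_singleton] at h1
      rcases h1 with h1 | h1
      · exact h1
      · exact absurd (g.injective (h1.trans hgy.symm)) hxy
  · rintro ⟨ha, hb⟩ e he
    by_cases hr : ∀ y ∈ e, ∀ e' ∈ Γ, y ∈ e' → e' = e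
    · exact ha e he hr
    · have : e.image ⇑g = e.image id :=
        Finset.image_congr (fun x hx => hb x e he hx hr)
      rw [this, Finset.image_id]
end

section
/- Let X be a finite type, n : ℕ, and A : Fin n → Set X an injective family of edges of a hypergraph Γ. Work in the Boolean ring R = AsBoolRing (Set (Equiv.Perm X)) of all sets of permutations of X, in which addition is symmetric difference and multiplication is intersection. Define the canonical matrix M : Matrix (Fin n) (Fin n) R by M i j = {g : Equiv.Perm X | g '' A i = A j}. Then the automorphism set of Γ equals the determinant of its canonical matrix: viewing Aut(Γ) = {g : Equiv.Perm X | ∀ i, ∃ j, g '' A i = A j} as an element of R, one has Aut(Γ) = Matrix.det M. -/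
open Classical in
/-- Evaluation of a set at a point, as a ring hom into `ZMod 2`. -/
noncomputable def evHom {α : Type*} (g : α) : AsBoolRing (Set α) →+* ZMod 2 where
  toFun s := if g ∈ ofBoolRing s then 1 else 0
  map_zero' := by simp
  map_one' := by simp
  map_add' s t := by
    rw [ofBoolRing_add, Set.mem_symmDiff]
    by_cases h1 : g ∈ ofBoolRing s <;> by_cases h2 : g ∈ ofBoolRing t <;> simp [h1, h2]
    decide
  map_mul' s t := by
    have hm : g ∈ ofBoolRing (s * t) ↔ g ∈ ofBoolRing s ∧ g ∈ ofBoolRing t := Iff.rfl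
    rw [hm]
    by_cases h1 : g ∈ ofBoolRing s <;> by_cases h2 : g ∈ ofBoolRing t <;> simp [h1, h2]

open Classical in
theorem evHom_apply {α : Type*} (g : α) (s : Set α) :
    evHom g (toBoolRing s) = if g ∈ s then 1 else 0 := rfl

theorem eq_of_evHom {α : Type*} (s t : AsBoolRing (Set α))
    (h : ∀ g, evHom g s = evHom g t) : s = t := by
  apply ofBoolRing.injective
  ext g
  have := h g
  rw [← toBoolRing_ofBoolRing s, ← toBoolRing_ofBoolRing t, evHom_apply, evHom_apply] at this
  by_cases h1 : g ∈ ofBoolRing s <;> by_cases h2 : g ∈ ofBoolRing t <;> simp_all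

theorem stmt_12 {X : Type*} [Fintype X] [DecidableEq X] (n : ℕ) (A : Fin n → Set X)
    (hA : Function.Injective A) :
    toBoolRing {g : Equiv.Perm X | ∀ i, ∃ j, ⇑g '' A i = A j}
      = Matrix.det (fun i j =>
          (toBoolRing {g : Equiv.Perm X | ⇑g '' A i = A j} :
            AsBoolRing (Set (Equiv.Perm X)))) := by
  classical
  apply eq_of_evHom
  intro g
  rw [evHom_apply, Set.mem_setOf_eq]
  refine Eq.trans ?_ (RingHom.map_det (evHom g) (Matrix.of fun i j =>
          (toBoolRing {g : Equiv.Perm X | ⇑g '' A i = A j} :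
            AsBoolRing (Set (Equiv.Perm X))))).symm
  by_cases h : ∀ i, ∃ j, ⇑g '' A i = A j
  · rw [if_pos h]
    choose f hf using h
    have hinj : Function.Injective f := by
      intro i j hij
      apply hA
      apply g.injective.image_injective
      change ⇑g '' A i = ⇑g '' A j
      rw [hf, hf, hij]
    let σ : Equiv.Perm (Fin n) := Equiv.ofBijective f (Finite.injective_iff_bijective.mp hinj)
    have hM : (evHom g).mapMatrix (Matrix.of fun i j =>
          (toBoolRing {g : Equiv.Perm X | ⇑g '' A i = A j} :
            AsBoolRing (Set (Equiv.Perm X)))) = σ.toPEquiv.toMatrix := by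
      ext i j
      change evHom g (toBoolRing {g : Equiv.Perm X | ⇑g '' A i = A j}) = _
      rw [evHom_apply, Set.mem_setOf_eq, PEquiv.toMatrix_apply]
      simp [σ, hf, hA.eq_iff, eq_comm]
    rw [hM, Matrix.det_permutation]
    rcases Int.units_eq_one_or (Equiv.Perm.sign σ) with h | h <;> rw [h] <;> decide
  · rw [if_neg h]
    push Not at h
    obtain ⟨i, hi⟩ := h
    symm
    apply Matrix.det_eq_zero_of_row_eq_zero i
    intro j
    change evHom g (toBoolRing {g : Equiv.Perm X | ⇑g '' A i = A j}) = _
    rw [evHom_apply, Set.mem_setOf_eq, if_neg (hi j)]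
end

section
/- Let X be a finite type, n : ℕ, and A : Fin n → Set X an injective family of edges of a hypergraph Γ. Then the automorphism set of Γ equals the product of the terminators, i.e. the intersection over each target edge index j of the union over source indices i of the permutations carrying A i onto A j: {g : Equiv.Perm X | ∀ i, ∃ j, g '' A i = A j} = ⋂ j, ⋃ i, {g : Equiv.Perm X | g '' A i = A j}. -/
theorem stmt_13 {X : Type*} [Fintype X] (n : ℕ) (A : Fin n → Set X)
    (hA : Function.Injective A) :
    {g : Equiv.Perm X | ∀ i, ∃ j, ⇑g '' A i = A j}
      = ⋂ j, ⋃ i, {g : Equiv.Perm X | ⇑g '' A i = A j} := by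
  ext g
  simp only [Set.mem_setOf_eq, Set.mem_iInter, Set.mem_iUnion]
  constructor
  · intro h
    choose f hf using h
    have hinj : Function.Injective f := by
      intro a b hab
      apply hA
      apply g.injective.image_injective
      change g '' A a = g '' A b
      rw [hf a, hf b, hab]
    intro j
    obtain ⟨i, hi⟩ := Finite.surjective_of_injective hinj j
    exact ⟨i, by rw [hf i, hi]⟩
  · intro h
    choose f hf using h
    have hinj : Function.Injective f := by
      intro a b hab
      apply hA
      rw [← hf a, ← hf b, hab]
    intro i
    obtain ⟨j, hj⟩ := Finite.surjective_of_injective hinj i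
    exact ⟨j, by rw [← hj, hf j]⟩
end

section
/- Let X and Y be finite types, n : ℕ, and let A : Fin n → Set X and B : Fin n → Set Y be injective families of edges of hypergraphs Γ₁ on X and Γ₂ on Y. Work in the Boolean ring R = AsBoolRing (Set (X ≃ Y)) of all sets of bijections from X to Y, in which addition is symmetric difference and multiplication is intersection. Define the canonical transformation M : Matrix (Fin n) (Fin n) R by M i j = {e : X ≃ Y | e '' A i = B j}. Then the isomorphism set Iso(Γ₁,Γ₂) = {e : X ≃ Y | Set.range (fun i => e '' A i) = Set.range B}, viewed as an element of R, equals Matrix.det M. -/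
open Classical in
/-- Evaluation at a point, as a ring homomorphism to `ZMod 2`. -/
noncomputable def evPt {α : Type*} (e : α) : AsBoolRing (Set α) →+* ZMod 2 where
  toFun S := if e ∈ ofBoolRing S then 1 else 0
  map_one' := if_pos (Set.mem_univ e)
  map_zero' := if_neg (Set.notMem_empty e)
  map_mul' S T := by
    have h : e ∈ ofBoolRing (S * T) ↔ e ∈ ofBoolRing S ∧ e ∈ ofBoolRing T := Iff.rfl
    by_cases h1 : e ∈ ofBoolRing S <;> by_cases h2 : e ∈ ofBoolRing T <;> simp [h, h1, h2]
  map_add' S T := by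
    have h : e ∈ ofBoolRing (S + T) ↔ (e ∈ ofBoolRing S ∧ e ∉ ofBoolRing T) ∨
        (e ∈ ofBoolRing T ∧ e ∉ ofBoolRing S) := Iff.rfl
    by_cases h1 : e ∈ ofBoolRing S <;> by_cases h2 : e ∈ ofBoolRing T <;> simp only [h, h1, h2] <;> decide

open Classical in
theorem evPt_toBoolRing {α : Type*} (e : α) (S : Set α) :
    evPt e (toBoolRing S) = if e ∈ S then 1 else 0 := rfl

theorem evPt_ext {α : Type*} {S T : AsBoolRing (Set α)} (h : ∀ e, evPt e S = evPt e T) :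
    S = T := by
  classical
  apply ofBoolRing.injective
  ext e
  have := h e
  change (if e ∈ ofBoolRing S then (1 : ZMod 2) else 0) =
    (if e ∈ ofBoolRing T then (1 : ZMod 2) else 0) at this
  by_cases h1 : e ∈ ofBoolRing S <;> by_cases h2 : e ∈ ofBoolRing T <;> simp_all

theorem stmt_15 {X Y : Type*} [Fintype X] [Fintype Y] (n : ℕ)
    (A : Fin n → Set X) (B : Fin n → Set Y)
    (hA : Function.Injective A) (hB : Function.Injective B) :
    toBoolRing {e : X ≃ Y | Set.range (fun i => ⇑e '' A i) = Set.range B}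
      = Matrix.det (fun i j =>
          (toBoolRing {e : X ≃ Y | ⇑e '' A i = B j} :
            AsBoolRing (Set (X ≃ Y)))) := by
  classical
  apply evPt_ext
  intro e
  let M : Matrix (Fin n) (Fin n) (AsBoolRing (Set (X ≃ Y))) :=
    Matrix.of fun i j => toBoolRing {e : X ≃ Y | ⇑e '' A i = B j}
  change _ = evPt e (Matrix.det M)
  rw [RingHom.map_det, evPt_toBoolRing]
  have hinj : Function.Injective (fun i => ⇑e '' A i) :=
    fun i j h => hA (e.injective.image_injective h)
  have hM : ∀ i j, ((evPt e).mapMatrix M) i j = if ⇑e '' A i = B j then (1 : ZMod 2) else 0 :=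
    fun i j => evPt_toBoolRing _ _
  by_cases hall : ∀ i, ∃ j, B j = ⇑e '' A i
  · choose s hs using hall
    have hsi : Function.Injective s := fun i j h => hinj (by
      change ⇑e '' A i = ⇑e '' A j
      rw [← hs, ← hs, h])
    let σ : Equiv.Perm (Fin n) := Equiv.ofBijective s (Finite.injective_iff_bijective.1 hsi)
    have hσ : ∀ i, σ i = s i := fun i => rfl
    have hr : Set.range (fun i => ⇑e '' A i) = Set.range B := by
      ext S
      constructor
      · rintro ⟨i, rfl⟩
        exact ⟨s i, hs i⟩
      · rintro ⟨j, rfl⟩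
        refine ⟨σ.symm j, ?_⟩
        change ⇑e '' A (σ.symm j) = B j
        rw [← hs, ← hσ, Equiv.apply_symm_apply]
    have hP : ((evPt e).mapMatrix M) = (Equiv.Perm.permMatrix (ZMod 2) σ) := by
      ext i j
      rw [hM, ← hs]
      simp only [hB.eq_iff, ← hσ]
      simp [Equiv.Perm.permMatrix, PEquiv.toMatrix_apply, eq_comm]
    rw [hP, Matrix.det_permutation, if_pos (by exact hr)]
    rcases Int.units_eq_one_or (Equiv.Perm.sign σ) with h | h <;> rw [h] <;> decide
  · push Not at hall
    obtain ⟨i, hi⟩ := hall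
    rw [if_neg, Matrix.det_eq_zero_of_row_eq_zero i]
    · intro j
      rw [hM, if_neg (fun h => hi j h.symm)]
    · intro h
      have : ⇑e '' A i ∈ Set.range B := by
        rw [← (show Set.range (fun i => ⇑e '' A i) = Set.range B from h)]
        exact ⟨i, rfl⟩
      obtain ⟨j, hj⟩ := this
      exact hi j hj
end
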